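/- arXiv:1404.1757 — 8 statements merged into one kernel-verified Lean document; each statement's English description precedes it below -/
import Mathlib

section
/- Let J be a Borel-fixed monomial ideal of k[x_0,…,x_n], let d ≥ 1, and let T be a monomial of degree d with T ∉ J. Suppose T·x_j ∈ J for some index j with j ≥ max(T). Then for every index i with max(T) ≤ i ≤ j, the monomial T·x_i is a minimal generator of J of degree d+1, i.e. T·x_i ∈ 𝒢(J)_{d+1}. -/
/-!
The Borel move from `x_j` to `x_i` puts `T * x_i` in `J`. Every variable `x_l` dividing `T * x_i`
satisfies `l ≤ i`, because `max T ≤ i`. Were `T * x_i / x_l` in `J`, the Borel move from `x_i` to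
`x_l` would put `T` itself in `J`; so `T * x_i` is a minimal generator.
-/

/-- The exponent vector of a monomial in the `N` variables `x_0, …, x_{N-1}`. -/
abbrev Mon (N : ℕ) : Type := Fin N → ℕ

/-- The total degree of a monomial. -/
def mdeg {N : ℕ} (m : Mon N) : ℕ := ∑ i, m i

/-- `mmax m` is the largest index `i` such that `x_i` divides `m` (`0` if `m = 1`). -/
def mmax {N : ℕ} (m : Mon N) : ℕ :=
  (Finset.univ.filter fun i : Fin N => 0 < m i).sup fun i => (i : ℕ)

/-- `J` is the set of monomials of a monomial ideal: membership is stable under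
multiplication by arbitrary monomials. -/
def IsMonomialIdeal {N : ℕ} (J : Set (Mon N)) : Prop :=
  ∀ m ∈ J, ∀ t : Mon N, m + t ∈ J

/-- Borel-fixed property (characteristic-zero combinatorial definition): if `m ∈ J`,
`x_i ∣ m` and `j ≤ i` then `(m / x_i) * x_j ∈ J`. -/
def IsBorelFixed {N : ℕ} (J : Set (Mon N)) : Prop :=
  ∀ (m : Mon N) (i j : Fin N), j ≤ i → m + Pi.single i 1 ∈ J → m + Pi.single j 1 ∈ J

/-- `m` is a minimal generator of the monomial ideal `J`. -/
def IsMinGen {N : ℕ} (J : Set (Mon N)) (m : Mon N) : Prop :=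
  m ∈ J ∧ ∀ ℓ : Fin N, 0 < m ℓ → m - Pi.single ℓ 1 ∉ J

/-- `𝒢(J)_d`: the set of minimal generators of `J` of degree `d`. -/
def minGens {N : ℕ} (J : Set (Mon N)) (d : ℕ) : Set (Mon N) :=
  {m | IsMinGen J m ∧ mdeg m = d}

/-- `ℳ_i(d, J)`: the set of minimal generators of `J` of degree `d` with `max = i`. -/
def Mset {N : ℕ} (J : Set (Mon N)) (d i : ℕ) : Set (Mon N) :=
  {m | IsMinGen J m ∧ mdeg m = d ∧ mmax m = i}

/-- `J ⊆ k[x_0, …, x_K]` is saturated with respect to the last variable `x_K`. -/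
def IsSatLast {K : ℕ} (J : Set (Mon (K + 1))) : Prop :=
  ∀ m : Mon (K + 1), m + Pi.single (Fin.last K) 1 ∈ J → m ∈ J

/-- The section ideal `J′ ⊆ k[x_0, …, x_{K-1}]` of `J ⊆ k[x_0, …, x_K]`, whose
monomials are the monomials `m` in `x_0, …, x_{K-1}` with `m * x_{K-1} ^ c ∈ J`
for some `c ≥ 0`. -/
def sectIdeal {K : ℕ} (J : Set (Mon (K + 1))) : Set (Mon K) :=
  {m | ∃ c : ℕ,
    (Fin.snoc m 0 : Mon (K + 1)) + Pi.single (⟨K - 1, by omega⟩ : Fin (K + 1)) c ∈ J}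

/-- Auxiliary form of the section ideal, allowing a degenerate number of variables. -/
def sectPred : {K : ℕ} → Set (Mon K) → Set (Mon (K - 1))
  | 0, J => J
  | _ + 1, J => sectIdeal J

/-- The iterated section ideal `J^(m) ⊆ k[x_0, …, x_{N-1-m}]`. -/
def iterSect {N : ℕ} (J : Set (Mon N)) : (m : ℕ) → Set (Mon (N - m))
  | 0 => J
  | m + 1 => sectPred (iterSect J m)

/-- Lemma 2.5 of the paper. Let `J` be a Borel-fixed monomial ideal
of `k[x_0, …, x_n]`, `d ≥ 1`, and `T ∉ J` a monomial of degree `d` with `T * x_j ∈ J`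
for some `j ≥ max T`. Then `T * x_i ∈ 𝒢(J)_{d+1}` for every `max T ≤ i ≤ j`. -/
theorem stmt0 {n : ℕ} (hn : 1 ≤ n) (J : Set (Mon (n + 1)))
    (hJ : IsMonomialIdeal J) (hB : IsBorelFixed J)
    (d : ℕ) (hd : 1 ≤ d) (T : Mon (n + 1)) (hT : mdeg T = d) (hTJ : T ∉ J)
    (j : Fin (n + 1)) (hjmax : mmax T ≤ (j : ℕ))
    (hTj : T + Pi.single j 1 ∈ J) :
    ∀ i : Fin (n + 1), mmax T ≤ (i : ℕ) → (i : ℕ) ≤ (j : ℕ) →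
      T + Pi.single i 1 ∈ minGens J (d + 1) := by
  intro i hTi hij
  refine ⟨⟨hB T j i hij hTj, fun l hl hmem => ?_⟩, ?_⟩
  · by_cases h : l = i
    · subst h
      rw [add_tsub_cancel_right] at hmem
      exact hTJ hmem
    · have hTl : 0 < T l := by simpa [h] using hl
      have hle : Pi.single l 1 ≤ T := by
        intro k
        rcases eq_or_ne k l with rfl | hk
        · simpa using Nat.succ_le_of_lt hTl
        · simp [hk]
      have hli : (l : ℕ) ≤ i :=
        (Finset.le_sup (f := fun k : Fin (n + 1) => (k : ℕ))
          (Finset.mem_filter.2 ⟨Finset.mem_univ l, hTl⟩)).trans hTi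
      -- The Borel move on `(T / x_l) * x_i`, from `x_i` to `x_l`, gives back `T`.
      rw [← tsub_add_eq_add_tsub hle] at hmem
      have := hB _ i l hli hmem
      rw [tsub_add_cancel_of_le hle] at this
      exact hTJ this
  · rw [← hT]
    simp [mdeg, Finset.sum_add_distrib]
end

section
/- Let J be a Borel-fixed monomial ideal of k[x_0,…,x_n] and let T be a monomial of degree d ≥ 1. Suppose T·x_j is a minimal generator of J for some index j with j ≥ max(T). Then T·x_i is a minimal generator of J of degree d+1 for every index i with max(T) ≤ i ≤ j. -/
theorem le_mmax {N : ℕ} {m : Mon N} {l : Fin N} (h : 0 < m l) : (l : ℕ) ≤ mmax m :=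
  Finset.le_sup (f := fun i : Fin N => (i : ℕ)) (by simpa using h)

theorem sub_single_add_single {N : ℕ} {m : Mon N} {l : Fin N} (h : 0 < m l) :
    m - Pi.single l 1 + Pi.single l 1 = m := by
  funext a
  by_cases hal : a = l
  · subst hal
    simp only [Pi.add_apply, Pi.sub_apply, Pi.single_eq_same]
    omega
  · simp [hal]

/-- Remark 2.6 of the paper. Let `J` be a Borel-fixed monomial ideal
of `k[x_0, …, x_n]` and `T` a monomial of degree `d ≥ 1` such that `T * x_j` is a
minimal generator of `J` for some `j ≥ max T`. Then `T * x_i` is a minimal generator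
of `J` of degree `d + 1` for every `max T ≤ i ≤ j`. -/
theorem stmt1 {n : ℕ} (hn : 1 ≤ n) (J : Set (Mon (n + 1)))
    (hJ : IsMonomialIdeal J) (hB : IsBorelFixed J)
    (d : ℕ) (hd : 1 ≤ d) (T : Mon (n + 1)) (hT : mdeg T = d)
    (j : Fin (n + 1)) (hjmax : mmax T ≤ (j : ℕ))
    (hTj : IsMinGen J (T + Pi.single j 1)) :
    ∀ i : Fin (n + 1), mmax T ≤ (i : ℕ) → (i : ℕ) ≤ (j : ℕ) →
      T + Pi.single i 1 ∈ minGens J (d + 1) := by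
  intro i hi hij
  have hTJ : T ∉ J := by
    have h := hTj.2 j (by simp)
    rwa [add_tsub_cancel_right] at h
  refine ⟨⟨hB T j i hij hTj.1, fun l hl hmem => hTJ ?_⟩, ?_⟩
  · by_cases hTl : 0 < T l
    · have hli : l ≤ i := (le_mmax hTl).trans hi
      have hcomm : T + Pi.single i 1 - Pi.single l 1 = T - Pi.single l 1 + Pi.single i 1 := by
        conv_lhs => rw [← sub_single_add_single hTl, add_right_comm]
        exact add_tsub_cancel_right _ _
      rw [hcomm] at hmem
      have h := hB _ i l hli hmem
      rwa [sub_single_add_single hTl] at h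
    · have hli : l = i := by
        by_contra hne
        simp [hne] at hl
        omega
      subst hli
      rwa [add_tsub_cancel_right] at hmem
  · rw [← hT]
    simp [mdeg, Finset.sum_add_distrib]
end

section
/- Let J be a Borel-fixed monomial ideal of k[x_0,…,x_n] with n ≥ 1. Then its section ideal J′ ⊆ k[x_0,…,x_{n−1}] is again a Borel-fixed monomial ideal, and J′ is x_{n−1}-saturated (i.e. m·x_{n−1} ∈ J′ implies m ∈ J′ for every monomial m). -/
theorem snoc_add_zero {K : ℕ} (a b : Mon K) :
    (Fin.snoc (a + b) 0 : Mon (K + 1)) = (Fin.snoc a 0 : Mon (K + 1)) + Fin.snoc b 0 := by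
  funext i
  refine Fin.lastCases ?_ (fun i => ?_) i <;> simp

theorem snoc_single_zero {K : ℕ} (i : Fin K) (c : ℕ) :
    (Fin.snoc (Pi.single i c : Mon K) 0 : Mon (K + 1)) = Pi.single i.castSucc c := by
  funext j
  refine Fin.lastCases ?_ (fun j => ?_) j
  · simp [(Fin.castSucc_lt_last i).ne']
  · simp [Pi.single_apply]

/-- The section ideal `J′ ⊆ k[x_0, …, x_{n-1}]` of a Borel-fixed
monomial ideal `J ⊆ k[x_0, …, x_n]` (`n ≥ 1`) is again a Borel-fixed monomial ideal,
and it is `x_{n-1}`-saturated. -/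
theorem stmt2 {n : ℕ} (hn : 1 ≤ n) (J : Set (Mon (n + 1)))
    (hJ : IsMonomialIdeal J) (hB : IsBorelFixed J) :
    IsMonomialIdeal (sectIdeal J) ∧ IsBorelFixed (sectIdeal J) ∧
      ∀ m : Mon n, m + Pi.single (⟨n - 1, by omega⟩ : Fin n) 1 ∈ sectIdeal J →
        m ∈ sectIdeal J := by
  refine ⟨?_, ?_, ?_⟩
  · rintro m ⟨c, hc⟩ t
    refine ⟨c, ?_⟩
    rw [snoc_add_zero, add_right_comm]
    exact hJ _ hc _
  · rintro m i j hij ⟨c, hc⟩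
    refine ⟨c, ?_⟩
    rw [snoc_add_zero, snoc_single_zero, add_right_comm] at hc ⊢
    exact hB _ i.castSucc j.castSucc hij hc
  · rintro m ⟨c, hc⟩
    refine ⟨1 + c, ?_⟩
    rw [snoc_add_zero, snoc_single_zero, add_assoc] at hc
    rw [Pi.single_add]
    exact hc
end

section
/- Let d ≥ 1 and let J be a Borel-fixed monomial ideal of k[x_0,…,x_n] all of whose minimal generators have degree at most d+1. Let T be a monomial of degree d not divisible by x_n with T ∉ J, and suppose T·x_{n−1}^k ∈ J for some k ≥ 1. Then already T·x_{n−1} ∈ J; consequently T·x_{n−1} is a minimal generator of J of degree d+1 with max(T·x_{n−1}) = n−1. -/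
/-- In a Borel-fixed ideal, if `S ∉ J` involves only variables up to `x_p` and `S * x_p ∈ J`,
then `S * x_p` is a minimal generator. -/
lemma isMinGen_add_single {N : ℕ} {J : Set (Mon N)} (hB : IsBorelFixed J) {S : Mon N} {p : Fin N}
    (hS : S ∉ J) (hSp : S + Pi.single p 1 ∈ J) (hsupp : ∀ i, p < i → S i = 0) :
    IsMinGen J (S + Pi.single p 1) := by
  refine ⟨hSp, fun l hl hmem => hS ?_⟩
  by_cases hlp : l = p
  · subst hlp
    simpa using hmem
  · have hSl : 0 < S l := by simpa [Pi.single_eq_of_ne hlp] using hl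
    have hle : l ≤ p := by
      by_contra! h
      exact hSl.ne' (hsupp l h)
    have hsub : Pi.single l 1 ≤ S := by
      intro i
      by_cases h : i = l
      · subst h
        simpa using Nat.succ_le_of_lt hSl
      · simp [Pi.single_eq_of_ne h]
    rw [← tsub_add_eq_add_tsub hsub] at hmem
    simpa [tsub_add_cancel_of_le hsub] using hB _ p l hle hmem

lemma mdeg_add_single {N : ℕ} (S : Mon N) (p : Fin N) (c : ℕ) :
    mdeg (S + Pi.single p c) = mdeg S + c := by
  simp [mdeg, Finset.sum_add_distrib]

lemma mmax_eq {N : ℕ} {S : Mon N} {p : Fin N} (hp : 0 < S p) (hsupp : ∀ i, p < i → S i = 0) :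
    mmax S = p := by
  apply le_antisymm
  · refine Finset.sup_le fun i hi => ?_
    by_contra! h
    have := hsupp i h
    simp_all
  · exact Finset.le_sup (f := fun i : Fin N => (i : ℕ)) (by simpa using hp)

/-- the claim `k₀ = 1` in the proof of Proposition 3.3. Let `J` be
Borel-fixed with all minimal generators of degree at most `d + 1` (`d ≥ 1`), and let
`T ∉ J` be a monomial of degree `d` not divisible by `x_n` with `T * x_{n-1}^k ∈ J`
for some `k ≥ 1`. Then already `T * x_{n-1} ∈ J`; consequently `T * x_{n-1}` is a
minimal generator of `J` of degree `d + 1` with `max (T * x_{n-1}) = n - 1`. -/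
theorem stmt3 {n : ℕ} (hn : 1 ≤ n) (J : Set (Mon (n + 1)))
    (hJ : IsMonomialIdeal J) (hB : IsBorelFixed J)
    (d : ℕ) (hd : 1 ≤ d)
    (hgen : ∀ m : Mon (n + 1), IsMinGen J m → mdeg m ≤ d + 1)
    (T : Mon (n + 1)) (hT : mdeg T = d) (hTfree : T (Fin.last n) = 0) (hTJ : T ∉ J)
    (k : ℕ) (hk : 1 ≤ k)
    (hTk : T + Pi.single (⟨n - 1, by omega⟩ : Fin (n + 1)) k ∈ J) :
    T + Pi.single (⟨n - 1, by omega⟩ : Fin (n + 1)) 1 ∈ J ∧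
      T + Pi.single (⟨n - 1, by omega⟩ : Fin (n + 1)) 1 ∈ Mset J (d + 1) (n - 1) := by
  classical
  set p : Fin (n + 1) := ⟨n - 1, by omega⟩ with hpdef
  have hsupp : ∀ c i, p < i → (T + Pi.single p c : Mon (n + 1)) i = 0 := by
    intro c i hi
    have hil : i = Fin.last n := by
      ext
      have := Fin.lt_def.1 hi
      have := i.2
      simp only [hpdef, Fin.val_last] at *
      omega
    simp [Pi.single_eq_of_ne hi.ne', hil ▸ hTfree]
  have hex : ∃ c, T + Pi.single p c ∈ J := ⟨k, hTk⟩
  obtain ⟨c, hc⟩ : ∃ c, Nat.find hex = c + 1 := by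
    refine Nat.exists_eq_succ_of_ne_zero fun h0 => hTJ ?_
    simpa [h0] using Nat.find_spec hex
  have hmem := Nat.find_spec hex
  have hnot : T + Pi.single p c ∉ J := Nat.find_min hex (by omega)
  rw [hc, Pi.single_add, ← add_assoc] at hmem
  have hgenc := isMinGen_add_single hB hnot hmem (hsupp c)
  have hdeg := hgen _ hgenc
  rw [mdeg_add_single, mdeg_add_single, hT] at hdeg
  obtain rfl : c = 0 := by omega
  simp only [Pi.single_zero, add_zero] at hgenc
  exact ⟨hgenc.1, hgenc, by rw [mdeg_add_single, hT], mmax_eq (p := p) (by simp) (hsupp 1)⟩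
end

section
/- Let J be a Borel-fixed monomial ideal of k[x_0,…,x_n] all of whose minimal generators have degree at most D. Let U be a monomial not divisible by x_n with deg(U) ≥ D, and suppose U·x_{n−1}^k ∈ J for some k ≥ 0. Then U ∈ J. (In other words, in degrees ≥ D the x_{n−1}-saturation adds no new x_n-free monomials to J.) -/
/-- The exponent-`1` case: a single factor `x_p` is cancelled, where `x_p` is the largest variable
that may occur in `V`. -/
lemma mem_of_add_single_mem {N : ℕ} {J : Set (Mon N)} (hB : IsBorelFixed J) {D : ℕ}
    (hgen : ∀ m : Mon N, IsMinGen J m → mdeg m ≤ D) {V : Mon N} {p : Fin N}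
    (hfree : ∀ i, p < i → V i = 0) (hdeg : D ≤ mdeg V) (hV : V + Pi.single p 1 ∈ J) :
    V ∈ J := by
  have hd : mdeg (V + Pi.single p 1) = mdeg V + 1 := by
    simp [mdeg, Finset.sum_add_distrib]
  have hnot : ¬ IsMinGen J (V + Pi.single p 1) := fun h => by
    have := hgen _ h
    omega
  obtain ⟨l, hl, hmem⟩ :
      ∃ l, 0 < (V + Pi.single p 1 : Mon N) l ∧ V + Pi.single p 1 - Pi.single l 1 ∈ J := by
    by_contra! hc
    exact hnot ⟨hV, hc⟩
  by_cases hlp : l = p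
  · subst hlp
    rwa [add_tsub_cancel_right] at hmem
  · have hVl : 0 < V l := by simpa [hlp] using hl
    have hle : l ≤ p := not_lt.mp fun h => by
      have := hfree l h
      omega
    have hsingle : (Pi.single l 1 : Mon N) ≤ V := by
      intro i
      by_cases hi : i = l
      · subst hi
        simpa using Nat.succ_le_of_lt hVl
      · simp [hi]
    rw [← tsub_add_eq_add_tsub hsingle] at hmem
    simpa [tsub_add_cancel_of_le hsingle] using hB _ p l hle hmem

/-- used in the proof of Proposition 3.6 (d). Let `J` be Borel-fixed
with all minimal generators of degree at most `D`, and let `U` be a monomial not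
divisible by `x_n` of degree `≥ D` with `U * x_{n-1}^k ∈ J` for some `k ≥ 0`.
Then `U ∈ J`. -/
theorem stmt4 {n : ℕ} (hn : 1 ≤ n) (J : Set (Mon (n + 1)))
    (hJ : IsMonomialIdeal J) (hB : IsBorelFixed J)
    (D : ℕ) (hgen : ∀ m : Mon (n + 1), IsMinGen J m → mdeg m ≤ D)
    (U : Mon (n + 1)) (hUfree : U (Fin.last n) = 0) (hUdeg : D ≤ mdeg U)
    (k : ℕ) (hUk : U + Pi.single (⟨n - 1, by omega⟩ : Fin (n + 1)) k ∈ J) :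
    U ∈ J := by
  induction k with
  | zero => simpa using hUk
  | succ k ih =>
    refine ih (mem_of_add_single_mem hB hgen (p := ⟨n - 1, by omega⟩) ?_ ?_ ?_)
    · intro i hi
      have hlast : i = Fin.last n := by
        apply Fin.ext
        have := i.isLt
        simp only [Fin.lt_def, Fin.val_last] at *
        omega
      have hne : Fin.last n ≠ (⟨n - 1, by omega⟩ : Fin (n + 1)) := by
        simp only [ne_eq, Fin.ext_iff, Fin.val_last]
        omega
      simp [hlast, hUfree, hne]
    · exact hUdeg.trans (Finset.sum_le_sum fun i _ => Nat.le_add_right _ _)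
    · rwa [add_assoc, ← Pi.single_add]
end

section
/- Let J be a Borel-fixed monomial ideal of k[x_0,…,x_n] which is x_n-saturated, contains no monomial of degree ≤ 1, and all of whose minimal generators have degree at most 3. Let J′ ⊆ k[x_0,…,x_{n−1}] be its section ideal and assume J′ also contains no monomial of degree ≤ 1. Then every minimal generator of J′ of degree 3 is a minimal generator of J of degree 3, i.e. 𝒢(J′)_3 ⊆ 𝒢(J)_3. -/
lemma IsMonomialIdeal.mem_of_le {N : ℕ} {J : Set (Mon N)} (hJ : IsMonomialIdeal J)
    {a b : Mon N} (ha : a ∈ J) (hab : a ≤ b) : b ∈ J := by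
  have := hJ a ha (b - a)
  rwa [add_tsub_cancel_of_le hab] at this

/-- Every monomial of `J` is divisible by a minimal generator, by well-foundedness of
divisibility. -/
lemma exists_isMinGen_le {N : ℕ} {J : Set (Mon N)} {w : Mon N} (hw : w ∈ J) :
    ∃ g, IsMinGen J g ∧ g ≤ w := by
  obtain ⟨g, hgw, hg⟩ := exists_minimal_le_of_wellFoundedLT (fun x => x ∈ J) w hw
  refine ⟨g, ⟨hg.prop, fun l hl hmem => ?_⟩, hgw⟩
  have h := hg.le_of_le hmem tsub_le_self l
  simp at h
  omega

/-- A divisor `a ∈ J` of a minimal generator `m` of a monomial ideal `J` is `m` itself. -/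
lemma IsMinGen.eq_of_le {N : ℕ} {J : Set (Mon N)} (hJ : IsMonomialIdeal J) {m a : Mon N}
    (hm : IsMinGen J m) (ha : a ∈ J) (ham : a ≤ m) : a = m := by
  by_contra hne
  obtain ⟨l, hl⟩ : ∃ l, a l < m l := by
    by_contra! h
    exact hne (le_antisymm ham h)
  refine hm.2 l (by omega) (hJ.mem_of_le ha fun i => ?_)
  have hi := ham i
  by_cases hil : i = l
  · subst hil
    simp
    omega
  · simpa [Pi.single_eq_of_ne hil] using hi

lemma isMonomialIdeal_sectIdeal {K : ℕ} {J : Set (Mon (K + 1))} (hJ : IsMonomialIdeal J) :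
    IsMonomialIdeal (sectIdeal J) := by
  rintro m ⟨c, hc⟩ t
  refine ⟨c, hJ.mem_of_le hc (add_le_add_left (fun i => ?_) _)⟩
  induction i using Fin.lastCases <;> simp

lemma eq_of_le_of_mdeg_le {N : ℕ} {a b : Mon N} (hab : a ≤ b) (hd : mdeg b ≤ mdeg a) :
    a = b := by
  have h : ∑ i, a i = ∑ i, b i := le_antisymm (Finset.sum_le_sum fun i _ => hab i) hd
  exact funext fun i =>
    (Finset.sum_eq_sum_iff_of_le fun i _ => hab i).1 h i (Finset.mem_univ i)

/-- Proposition 3.6 (d), generic-initial-ideal form, degree-3 level.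
Let `J ⊆ k[x_0, …, x_n]` be Borel-fixed, `x_n`-saturated, with no monomial of degree
`≤ 1` and all minimal generators of degree `≤ 3`; assume the section ideal
`J′ ⊆ k[x_0, …, x_{n-1}]` also has no monomial of degree `≤ 1`. Then every minimal
generator of `J′` of degree `3` (viewed inside `k[x_0, …, x_n]`) is a minimal
generator of `J` of degree `3`. -/
theorem stmt10 {n : ℕ} (hn : 1 ≤ n) (J : Set (Mon (n + 1)))
    (hJ : IsMonomialIdeal J) (hB : IsBorelFixed J) (hsat : IsSatLast J)
    (hJ1 : ∀ T ∈ J, ¬ mdeg T ≤ 1)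
    (hgen : ∀ m : Mon (n + 1), IsMinGen J m → mdeg m ≤ 3)
    (hJ'1 : ∀ T ∈ sectIdeal J, ¬ mdeg T ≤ 1) :
    (fun m : Mon n => (Fin.snoc m 0 : Mon (n + 1))) '' minGens (sectIdeal J) 3
      ⊆ minGens J 3 := by
  rintro _ ⟨m, ⟨hm, hdeg⟩, rfl⟩
  have hsnoc : mdeg (Fin.snoc m 0 : Mon (n + 1)) = 3 := by
    simpa [mdeg, Fin.sum_univ_castSucc] using hdeg
  obtain ⟨c, hc⟩ := hm.1
  obtain ⟨g, hg, hgw⟩ := exists_isMinGen_le hc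
  -- `a` is `gcd(g, m)`, a monomial in `x_0, …, x_{n-1}`.
  set a : Mon n := fun i => min (g i.castSucc) (m i) with ha
  have haJ : a ∈ sectIdeal J := by
    refine ⟨c, hJ.mem_of_le hg.1 fun i => ?_⟩
    have hi := hgw i
    induction i using Fin.lastCases with
    | last => simpa using hi
    | cast i =>
      simp only [Pi.add_apply, Fin.snoc_castSucc, ha] at hi ⊢
      omega
  have ham : a = m :=
    hm.eq_of_le (isMonomialIdeal_sectIdeal hJ) haJ fun i => min_le_right _ _
  have hmg : (Fin.snoc m 0 : Mon (n + 1)) ≤ g := by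
    intro i
    induction i using Fin.lastCases with
    | last => simp
    | cast i =>
      rw [Fin.snoc_castSucc, ← ham]
      exact min_le_left _ _
  have heq := eq_of_le_of_mdeg_le hmg (hsnoc ▸ hgen g hg)
  refine ⟨?_, hsnoc⟩
  show IsMinGen J (Fin.snoc m 0 : Mon (n + 1))
  rwa [heq]
end

section
/- Let k be an algebraically closed field of characteristic 0, R = k[x_0,…,x_n], and I ⊊ R a saturated homogeneous ideal whose Hilbert function d ↦ dim_k(R_d/I_d) agrees for all sufficiently large d with a polynomial P ∈ ℚ[t] of degree r; set e = n−r and deg := r!·(leading coefficient of P). Assume the ND(1) property: for every j with e ≤ j ≤ n there exists a nonzero polynomial F_j in (n−j)(n+1) variables over k such that for every (n−j)-tuple (ℓ_1,…,ℓ_{n−j}) of linear forms of R whose concatenated coefficient vector is not a zero of F_j, the degree-1 part of the saturation of the ideal I + (ℓ_1,…,ℓ_{n−j}) equals the k-linear span of ℓ_1,…,ℓ_{n−j}. Then deg ≥ e + 1. -/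
/-!
Write `H_I` for the Hilbert function of `R/I`. The degree bound follows from a lower bound for `H_I`
which is summed up from a zero-dimensional linear section.

If `J` is saturated, no associated prime of `R/J` contains all the variables, so a general linear
form `ℓ` is a nonzerodivisor on `R/J` (`exists_linForm_regular`). For such an `ℓ` and any
`K ⊇ J + (ℓ)`, multiplication by `ℓ` gives `H_J(d+1) ≥ H_J(d) + H_K(d+1)` (`hilbFun_succ_ge`).
Take `K` to be the saturation of `J + (ℓ)` and iterate with `m` general linear forms. The result is
`H_I(d+1) ≥ h * (d+m choose m)`, where `h` is the value at `1` of the Hilbert function of the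
saturation of `I + (ℓ_1, …, ℓ_m)` (`exists_section_bound`). Only inequalities are summed, so it is
never needed that saturating leaves the Hilbert polynomial unchanged.

With `m = n - e`, the property `ND(1)` says that the degree-1 part of the last saturation has
dimension at most `m`, so `h ≥ n + 1 - m = e + 1`. If `r ≤ n` then `m = r`, and comparing growth
rates gives the claim. If `r > n` then `e = 0`, and the claim only says that the positive number
`r! * lc(P)` is at least `1`; it is an integer, being an `r`-th difference of an integer sequence.
-/


/-- The Hilbert function of `R/I` for a homogeneous ideal
`I ⊆ R = k[x_0, …, x_n]`: in degree `d` it is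
`dim_k (R_d / I_d) = dim_k R_d - dim_k I_d`. -/
noncomputable def hilbFun {k : Type*} [Field k] {n : ℕ}
    (I : Ideal (MvPolynomial (Fin (n + 1)) k)) (d : ℕ) : ℕ :=
  Module.finrank k (MvPolynomial.homogeneousSubmodule (Fin (n + 1)) k d) -
    Module.finrank k
      ↥(Submodule.restrictScalars k I ⊓ MvPolynomial.homogeneousSubmodule (Fin (n + 1)) k d)

open MvPolynomial

/-- The linear form `∑ a_i x_i`. -/
noncomputable def linForm {k : Type*} [Field k] {n : ℕ} (a : Fin (n + 1) → k) :
    MvPolynomial (Fin (n + 1)) k :=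
  ∑ i : Fin (n + 1), C (a i) * X i

/-- The saturation of an ideal `K` with respect to the irrelevant ideal: all `f` such that
some power of every variable multiplies `f` into `K`. -/
noncomputable def satIdeal {k : Type*} [Field k] {n : ℕ}
    (K : Ideal (MvPolynomial (Fin (n + 1)) k)) : Ideal (MvPolynomial (Fin (n + 1)) k) where
  carrier := {f | ∃ M : ℕ, ∀ i : Fin (n + 1), X i ^ M * f ∈ K}
  zero_mem' := ⟨0, fun i => by simp⟩
  add_mem' := by
    rintro f g ⟨M, hM⟩ ⟨N, hN⟩
    refine ⟨M + N, fun i => ?_⟩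
    have h1 := K.mul_mem_left (X i ^ N) (hM i)
    have h2 := K.mul_mem_left (X i ^ M) (hN i)
    convert K.add_mem h1 h2 using 1
    ring
  smul_mem' := by
    rintro g f ⟨M, hM⟩
    refine ⟨M, fun i => ?_⟩
    convert K.mul_mem_left g (hM i) using 1
    simp only [smul_eq_mul]
    ring

/-! ### Saturation of ideals -/

section Saturation

variable {k : Type*} [Field k] {n : ℕ}

theorem le_satIdeal (K : Ideal (MvPolynomial (Fin (n + 1)) k)) : K ≤ satIdeal K :=
  fun f hf => ⟨0, fun i => by simpa using hf⟩

/-- Exponents that depend on the variable can be replaced by a common one. -/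
theorem mem_satIdeal_of_forall {K : Ideal (MvPolynomial (Fin (n + 1)) k)}
    {f : MvPolynomial (Fin (n + 1)) k} (h : ∀ i, ∃ M : ℕ, X i ^ M * f ∈ K) : f ∈ satIdeal K := by
  choose M hM using h
  refine ⟨∑ i, M i, fun i => ?_⟩
  have hle : M i ≤ ∑ j, M j := Finset.single_le_sum (fun _ _ => Nat.zero_le _) (Finset.mem_univ i)
  obtain ⟨t, ht⟩ := Nat.exists_eq_add_of_le hle
  convert K.mul_mem_left (X i ^ t) (hM i) using 1
  rw [ht]
  ring

/-- `satIdeal K` is saturated. -/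
theorem mem_satIdeal_of_X_mul (K : Ideal (MvPolynomial (Fin (n + 1)) k))
    (f : MvPolynomial (Fin (n + 1)) k) (h : ∀ i, X i * f ∈ satIdeal K) : f ∈ satIdeal K := by
  refine mem_satIdeal_of_forall fun i => ?_
  obtain ⟨M, hM⟩ := h i
  refine ⟨M + 1, ?_⟩
  convert hM i using 1
  ring

theorem satIdeal_le_of_le {K L : Ideal (MvPolynomial (Fin (n + 1)) k)} (h : K ≤ satIdeal L) :
    satIdeal K ≤ satIdeal L := by
  rintro f ⟨M, hM⟩
  refine mem_satIdeal_of_forall fun i => ?_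
  obtain ⟨N, hN⟩ := h (hM i)
  refine ⟨N + M, ?_⟩
  convert hN i using 1
  ring

end Saturation

/-! ### General linear forms are regular modulo a saturated ideal -/

section Regular

variable {k : Type*} [Field k] {n : ℕ}

theorem linForm_isHomogeneous (a : Fin (n + 1) → k) : (linForm a).IsHomogeneous 1 :=
  IsHomogeneous.sum _ _ _ fun i _ => isHomogeneous_C_mul_X (a i) i

theorem exists_eval_ne_zero_of_ne_zero [Infinite k] {σ : Type*} {F : MvPolynomial σ k}
    (hF : F ≠ 0) : ∃ x : σ → k, eval x F ≠ 0 := by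
  by_contra! h
  exact hF (MvPolynomial.funext fun x => by simpa using h x)

/-- If `p` misses some variable, the coefficient vectors of the linear forms in `p` lie in a
hyperplane, namely the zero locus of `G`. -/
theorem exists_linear_poly (p : Ideal (MvPolynomial (Fin (n + 1)) k))
    (hp : ∃ i, (X i : MvPolynomial (Fin (n + 1)) k) ∉ p) :
    ∃ G : MvPolynomial (Fin (n + 1)) k, G ≠ 0 ∧ ∀ a, eval a G ≠ 0 → linForm a ∉ p := by
  classical
  obtain ⟨i, hi⟩ := hp
  -- a functional on `R` that kills `p` but not `x_i`
  obtain ⟨φ, hφi, hφ⟩ := Submodule.exists_le_ker_of_notMem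
    (p := p.restrictScalars k) (show X i ∉ p.restrictScalars k from hi)
  have heval : ∀ a, eval a (∑ j, C (φ (X j)) * X j) = φ (linForm a) := by
    intro a
    simp only [linForm, map_sum, C_mul', map_smul, smul_eval, eval_X, smul_eq_mul]
    exact Finset.sum_congr rfl fun j _ => mul_comm _ _
  refine ⟨∑ j, C (φ (X j)) * X j, fun h0 => hφi ?_, fun a ha hmem => ha ?_⟩
  · have := heval (Pi.single i 1)
    rw [h0, map_zero] at this
    rw [this]
    congr 1
    simp [linForm, Pi.single_apply, apply_ite C]
  · rw [heval]
    exact hφ hmem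

/-- A general linear form is a nonzerodivisor modulo a saturated ideal: such a form exists
off the zero locus of any given nonzero polynomial `F` in its coefficients. -/
theorem exists_linForm_regular [Infinite k] (I : Ideal (MvPolynomial (Fin (n + 1)) k))
    (hsat : ∀ f : MvPolynomial (Fin (n + 1)) k, (∀ i, X i * f ∈ I) → f ∈ I)
    (F : MvPolynomial (Fin (n + 1)) k) (hF : F ≠ 0) :
    ∃ a : Fin (n + 1) → k, eval a F ≠ 0 ∧ ∀ f, linForm a * f ∈ I → f ∈ I := by
  classical
  have hfin := associatedPrimes.finite (MvPolynomial (Fin (n + 1)) k)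
    (MvPolynomial (Fin (n + 1)) k ⧸ I)
  have key : ∀ p : Ideal (MvPolynomial (Fin (n + 1)) k),
      ∃ G : MvPolynomial (Fin (n + 1)) k, G ≠ 0 ∧
        (p ∈ associatedPrimes (MvPolynomial (Fin (n + 1)) k)
          (MvPolynomial (Fin (n + 1)) k ⧸ I) → ∀ a, eval a G ≠ 0 → linForm a ∉ p) := by
    intro p
    by_cases hp : p ∈ associatedPrimes (MvPolynomial (Fin (n + 1)) k)
        (MvPolynomial (Fin (n + 1)) k ⧸ I)
    · obtain ⟨G, hG, h⟩ := exists_linear_poly p (by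
        -- otherwise `p = ann(x)` with `x ≠ 0` killed by all variables
        by_contra! hall
        rw [AssociatedPrimes.mem_iff, isAssociatedPrime_iff] at hp
        obtain ⟨hprime, x, rfl⟩ := hp
        obtain ⟨f, rfl⟩ := Ideal.Quotient.mk_surjective x
        have hf : f ∈ I := hsat f fun i => by
          have := hall i
          rw [Submodule.mem_colon_singleton, Submodule.mem_bot, ← Ideal.Quotient.mk_eq_mk,
            ← Submodule.Quotient.mk_smul, Submodule.Quotient.mk_eq_zero] at this
          exact this
        apply hprime.ne_top
        rw [Ideal.Quotient.eq_zero_iff_mem.mpr hf]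
        simp)
      exact ⟨G, hG, fun _ => h⟩
    · exact ⟨1, one_ne_zero, fun h => absurd h hp⟩
  choose G hG0 hG using key
  obtain ⟨a, ha⟩ := exists_eval_ne_zero_of_ne_zero
    (mul_ne_zero hF (Finset.prod_ne_zero_iff.mpr fun p (_ : p ∈ hfin.toFinset) => hG0 p))
  rw [map_mul, map_prod] at ha
  refine ⟨a, left_ne_zero_of_mul ha, fun f hf => ?_⟩
  by_contra hfI
  have hmem : linForm a ∈ ⋃ p ∈ associatedPrimes (MvPolynomial (Fin (n + 1)) k)
      (MvPolynomial (Fin (n + 1)) k ⧸ I), (p : Set (MvPolynomial (Fin (n + 1)) k)) := by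
    rw [biUnion_associatedPrimes_eq_zero_divisors]
    refine ⟨Ideal.Quotient.mk I f, fun h => hfI (Ideal.Quotient.eq_zero_iff_mem.mp h), ?_⟩
    rw [← Ideal.Quotient.mk_eq_mk, ← Submodule.Quotient.mk_smul, Submodule.Quotient.mk_eq_zero]
    exact hf
  simp only [Set.mem_iUnion] at hmem
  obtain ⟨p, hp, hap⟩ := hmem
  exact hG p hp a (Finset.prod_ne_zero_iff.mp (right_ne_zero_of_mul ha) p
    (hfin.mem_toFinset.mpr hp)) hap

end Regular

/-! ### Hilbert functions of linear sections -/

section Hilbert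

variable {k : Type*} [Field k] {n : ℕ}

instance finite_homogeneousSubmodule (d : ℕ) :
    Module.Finite k (homogeneousSubmodule (Fin (n + 1)) k d) :=
  Module.Finite.iff_fg.mpr (homogeneousSubmodule_fg (Fin (n + 1)) k d)

/-- The degree-`d` part of an ideal. -/
noncomputable abbrev gradedPart (I : Ideal (MvPolynomial (Fin (n + 1)) k)) (d : ℕ) :
    Submodule k (MvPolynomial (Fin (n + 1)) k) :=
  Submodule.restrictScalars k I ⊓ homogeneousSubmodule (Fin (n + 1)) k d

instance finite_gradedPart (I : Ideal (MvPolynomial (Fin (n + 1)) k)) (d : ℕ) :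
    Module.Finite k (gradedPart I d) :=
  Submodule.finiteDimensional_of_le (S₂ := homogeneousSubmodule (Fin (n + 1)) k d) inf_le_right

/-- The truncated subtraction in `hilbFun` is a genuine one. -/
theorem hilbFun_add_finrank (I : Ideal (MvPolynomial (Fin (n + 1)) k)) (d : ℕ) :
    hilbFun I d + Module.finrank k (gradedPart I d) =
      Module.finrank k (homogeneousSubmodule (Fin (n + 1)) k d) :=
  Nat.sub_add_cancel (Submodule.finrank_mono inf_le_right)

theorem hilbFun_anti {I J : Ideal (MvPolynomial (Fin (n + 1)) k)} (h : I ≤ J) (d : ℕ) :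
    hilbFun J d ≤ hilbFun I d := by
  have h1 := hilbFun_add_finrank I d
  have h2 := hilbFun_add_finrank J d
  have h3 : Module.finrank k (gradedPart I d) ≤ Module.finrank k (gradedPart J d) :=
    Submodule.finrank_mono (inf_le_inf_right _ h)
  omega

/-- Cutting by a linear form regular on `R/I`: the Hilbert function of the section is at most the
first difference of that of `I`. -/
theorem hilbFun_succ_ge {I J : Ideal (MvPolynomial (Fin (n + 1)) k)} (a : Fin (n + 1) → k)
    (hreg : ∀ f, linForm a * f ∈ I → f ∈ I) (hIJ : I ≤ J) (haJ : linForm a ∈ J) (d : ℕ) :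
    hilbFun I d + hilbFun J (d + 1) ≤ hilbFun I (d + 1) := by
  -- the map `(f, g) ↦ ℓ f + g` from `R_d × I_{d+1}` to `J_{d+1}`; its kernel embeds in `I_d`
  let ψ : (homogeneousSubmodule (Fin (n + 1)) k d) × (gradedPart I (d + 1)) →ₗ[k]
      MvPolynomial (Fin (n + 1)) k :=
    LinearMap.coprod
      ((LinearMap.mulLeft k (linForm a)).comp (homogeneousSubmodule (Fin (n + 1)) k d).subtype)
      (gradedPart I (d + 1)).subtype
  have hψ : ∀ x, ψ x = linForm a * (x.1 : MvPolynomial (Fin (n + 1)) k) + x.2 := fun x => rfl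
  have hrange : LinearMap.range ψ ≤ gradedPart J (d + 1) := by
    rintro _ ⟨x, rfl⟩
    rw [hψ]
    refine ⟨J.add_mem (J.mul_mem_right _ haJ) (hIJ x.2.2.1), ?_⟩
    refine IsHomogeneous.add ?_ x.2.2.2
    have hmul := (linForm_isHomogeneous a).mul x.1.2
    rwa [add_comm 1 d] at hmul
  have hker : ∀ x ∈ LinearMap.ker ψ, (x.1 : MvPolynomial (Fin (n + 1)) k) ∈ gradedPart I d := by
    intro x hx
    rw [LinearMap.mem_ker, hψ] at hx
    refine ⟨hreg _ ?_, x.1.2⟩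
    rw [eq_neg_of_add_eq_zero_left hx]
    exact I.neg_mem x.2.2.1
  let χ : LinearMap.ker ψ →ₗ[k] gradedPart I d :=
    LinearMap.codRestrict (gradedPart I d)
      ((homogeneousSubmodule (Fin (n + 1)) k d).subtype.comp
        ((LinearMap.fst k _ _).comp (LinearMap.ker ψ).subtype)) fun x => hker x.1 x.2
  have hχ : Function.Injective χ := by
    rw [injective_iff_map_eq_zero]
    rintro ⟨x, hx⟩ h0
    have h1 : (x.1 : MvPolynomial (Fin (n + 1)) k) = 0 := congrArg Subtype.val h0
    rw [LinearMap.mem_ker, hψ, h1, mul_zero, zero_add] at hx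
    exact Subtype.ext (Prod.ext (Subtype.ext h1) (Subtype.ext hx))
  have h1 := LinearMap.finrank_range_add_finrank_ker ψ
  rw [Module.finrank_prod] at h1
  have h2 := Submodule.finrank_mono hrange
  have h3 := LinearMap.finrank_le_finrank_of_injective hχ
  have h4 := hilbFun_add_finrank I d
  have h5 := hilbFun_add_finrank I (d + 1)
  have h6 := hilbFun_add_finrank J (d + 1)
  omega

/-- Iterated linear sections, with coefficients off the zero locus of a given `F ≠ 0`,
bound the Hilbert function from below by a binomial coefficient times the value at `1` of the
Hilbert function of the final saturated section. -/
theorem exists_section_bound [Infinite k] (m : ℕ) (I : Ideal (MvPolynomial (Fin (n + 1)) k))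
    (hsat : ∀ f : MvPolynomial (Fin (n + 1)) k, (∀ i, X i * f ∈ I) → f ∈ I)
    (F : MvPolynomial (Fin m × Fin (n + 1)) k) (hF : F ≠ 0) :
    ∃ c : Fin m → Fin (n + 1) → k,
      eval (fun p : Fin m × Fin (n + 1) => c p.1 p.2) F ≠ 0 ∧
      ∀ d, hilbFun (satIdeal (I ⊔ Ideal.span (Set.range fun s => linForm (c s)))) 1 *
        (d + m).choose m ≤ hilbFun I (d + 1) := by
  induction m generalizing I with
  | zero =>
    obtain ⟨x, hx⟩ := exists_eval_ne_zero_of_ne_zero hF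
    refine ⟨fun s i => x (s, i), hx, fun d => ?_⟩
    obtain ⟨a, -, ha⟩ := exists_linForm_regular I hsat 1 one_ne_zero
    simp only [add_zero, Nat.choose_zero_right, mul_one]
    refine (hilbFun_anti (le_sup_left.trans (le_satIdeal _)) 1).trans ?_
    induction d with
    | zero => rfl
    | succ d ih => have := hilbFun_succ_ge (J := ⊤) a ha le_top trivial (d + 1); omega
  | succ m ih =>
    obtain ⟨x, hx⟩ := exists_eval_ne_zero_of_ne_zero hF
    -- `F` with all but the first form specialised to the values given by `x`
    let G : MvPolynomial (Fin (n + 1)) k :=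
      aeval (fun p : Fin (m + 1) × Fin (n + 1) =>
        Fin.cases (motive := fun _ => MvPolynomial (Fin (n + 1)) k)
          (X p.2) (fun s => C (x (s.succ, p.2))) p.1) F
    have hG : ∀ a, eval a G = eval (fun p : Fin (m + 1) × Fin (n + 1) =>
        (Fin.cons a fun s i => x (s.succ, i) : Fin (m + 1) → Fin (n + 1) → k) p.1 p.2) F := by
      intro a
      rw [← coe_aeval_eq_eval, ← coe_aeval_eq_eval]
      simp only [G, RingHom.coe_coe, comp_aeval_apply]
      congr 2
      funext ⟨s, i⟩
      cases s using Fin.cases <;> simp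
    have hG0 : G ≠ 0 := by
      intro h0
      have := hG fun i => x (0, i)
      rw [h0, map_zero] at this
      apply hx
      rw [this]
      congr 2
      funext ⟨s, i⟩
      cases s using Fin.cases <;> simp
    obtain ⟨a, haG, hreg⟩ := exists_linForm_regular I hsat G hG0
    -- `F` with the first form specialised to `a`
    let F' : MvPolynomial (Fin m × Fin (n + 1)) k :=
      aeval (fun p : Fin (m + 1) × Fin (n + 1) =>
        Fin.cases (motive := fun _ => MvPolynomial (Fin m × Fin (n + 1)) k)
          (C (a p.2)) (fun s => X (s, p.2)) p.1) F
    have hF' : ∀ c : Fin m → Fin (n + 1) → k, eval (fun p : Fin m × Fin (n + 1) => c p.1 p.2) F' =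
        eval (fun p : Fin (m + 1) × Fin (n + 1) =>
          (Fin.cons a c : Fin (m + 1) → Fin (n + 1) → k) p.1 p.2) F := by
      intro c
      rw [← coe_aeval_eq_eval, ← coe_aeval_eq_eval]
      simp only [F', RingHom.coe_coe, comp_aeval_apply]
      congr 2
      funext ⟨s, i⟩
      cases s using Fin.cases <;> simp
    have hF'0 : F' ≠ 0 := by
      intro h0
      have := hF' fun s i => x (s.succ, i)
      rw [h0, map_zero] at this
      exact haG ((hG a).trans this.symm)
    let J := satIdeal (I ⊔ Ideal.span {linForm a})
    have hIJ : I ≤ J := le_sup_left.trans (le_satIdeal _)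
    have haJ : linForm a ∈ J :=
      le_satIdeal _ (le_sup_right (a := I) (Ideal.mem_span_singleton_self _))
    obtain ⟨c, hc, hbound⟩ := ih J (mem_satIdeal_of_X_mul _) F' hF'0
    refine ⟨Fin.cons a c, by rwa [← hF'], ?_⟩
    set L := I ⊔ Ideal.span (Set.range fun s =>
      linForm ((Fin.cons a c : Fin (m + 1) → Fin (n + 1) → k) s)) with hL
    set h := hilbFun (satIdeal L) 1
    have hmemL : ∀ s, linForm ((Fin.cons a c : Fin (m + 1) → Fin (n + 1) → k) s) ∈ L := fun s =>
      le_sup_right (a := I) (Ideal.subset_span ⟨s, rfl⟩)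
    have hle : satIdeal (J ⊔ Ideal.span (Set.range fun s => linForm (c s))) ≤ satIdeal L := by
      refine satIdeal_le_of_le (sup_le (satIdeal_le_of_le ((sup_le le_sup_left ?_).trans
        (le_satIdeal L))) (le_trans ?_ (le_satIdeal L)))
      · rw [Ideal.span_singleton_le_iff_mem]
        exact hmemL 0
      · rw [Ideal.span_le]
        rintro _ ⟨s, rfl⟩
        exact hmemL s.succ
    have hJ : ∀ d, h * (d + m).choose m ≤ hilbFun J (d + 1) := fun d =>
      (Nat.mul_le_mul_right _ (hilbFun_anti hle 1)).trans (hbound d)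
    have hstep := hilbFun_succ_ge a hreg hIJ haJ
    intro d
    induction d with
    | zero =>
      have h1 := hJ 0
      have h2 := hstep 0
      simp only [zero_add, Nat.choose_self, mul_one] at h1 h2 ⊢
      omega
    | succ d ihd =>
      have h1 := hJ (d + 1)
      have h2 := hstep (d + 1)
      have h3 : (d + 1 + (m + 1)).choose (m + 1) =
          (d + 1 + m).choose m + (d + (m + 1)).choose (m + 1) := by
        rw [show d + 1 + (m + 1) = (d + 1 + m) + 1 by ring, Nat.choose_succ_succ',
          show d + 1 + m = d + (m + 1) by ring]
      rw [h3, mul_add]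
      omega

theorem le_finrank_homogeneousSubmodule_one :
    n + 1 ≤ Module.finrank k (homogeneousSubmodule (Fin (n + 1)) k 1) := by
  have hli : LinearIndependent k (fun i : Fin (n + 1) =>
      (⟨X i, isHomogeneous_X k i⟩ : homogeneousSubmodule (Fin (n + 1)) k 1)) := by
    apply LinearIndependent.of_comp (homogeneousSubmodule (Fin (n + 1)) k 1).subtype
    exact linearIndependent_X (Fin (n + 1)) k
  simpa using hli.fintype_card_le_finrank

/-- If the linear forms in `K` lie in the span of `m` elements, then `H_K(1) ≥ n + 1 - m`. -/
theorem le_hilbFun_one {m : ℕ} (K : Ideal (MvPolynomial (Fin (n + 1)) k))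
    (v : Fin m → MvPolynomial (Fin (n + 1)) k)
    (h : ∀ f : MvPolynomial (Fin (n + 1)) k, f.IsHomogeneous 1 → f ∈ K →
      f ∈ Submodule.span k (Set.range v)) : n + 1 ≤ hilbFun K 1 + m := by
  have h1 : gradedPart K 1 ≤ Submodule.span k (Set.range v) := fun f hf => h f hf.2 hf.1
  have : Module.Finite k (Submodule.span k (Set.range v)) :=
    Module.Finite.span_of_finite k (Set.finite_range v)
  have h2 := Submodule.finrank_mono h1
  have h3 : Module.finrank k (Submodule.span k (Set.range v)) ≤ m := by
    simpa [Set.finrank] using finrank_range_le_card (R := k) v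
  have h4 := hilbFun_add_finrank K 1
  have h5 := le_finrank_homogeneousSubmodule_one (k := k) (n := n)
  omega

end Hilbert

/-! ### Leading coefficients -/

section Growth

open Filter Topology

theorem tendsto_eval_div_pow (P : Polynomial ℚ) (r : ℕ) (hP : P.degree = (r : WithBot ℕ)) :
    Tendsto (fun d : ℕ => P.eval (d : ℚ) / (d : ℚ) ^ r) atTop (𝓝 P.leadingCoeff) := by
  have h := Polynomial.div_tendsto_atTop_leadingCoeff_div_of_degree_eq P
    (Polynomial.X ^ r : Polynomial ℚ) (by rw [hP, Polynomial.degree_X_pow])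
  simp only [Polynomial.leadingCoeff_X_pow, div_one, Polynomial.eval_pow, Polynomial.eval_X] at h
  exact h.comp tendsto_natCast_atTop_atTop

theorem le_leadingCoeff_of_choose_le (P : Polynomial ℚ) (r : ℕ) (hP : P.degree = (r : WithBot ℕ))
    (h N : ℕ) (hN : ∀ d : ℕ, N ≤ d → (h : ℚ) * ((d + r).choose r : ℚ) ≤ P.eval ((d + 1 : ℕ) : ℚ)) :
    (h : ℚ) ≤ (r.factorial : ℚ) * P.leadingCoeff := by
  have hfac : (0 : ℚ) < r.factorial := by exact_mod_cast r.factorial_pos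
  rw [mul_comm, ← div_le_iff₀ hfac]
  refine ge_of_tendsto ((tendsto_eval_div_pow P r hP).comp (tendsto_add_atTop_nat 1)) ?_
  filter_upwards [eventually_ge_atTop N] with d hd
  have hpow : (0 : ℚ) < ((d + 1 : ℕ) : ℚ) ^ r := by positivity
  rw [Function.comp_apply, le_div_iff₀ hpow]
  refine le_trans ?_ (hN d hd)
  rw [div_mul_eq_mul_div, mul_div_assoc]
  refine mul_le_mul_of_nonneg_left ?_ (Nat.cast_nonneg h)
  rw [div_le_iff₀' hfac]
  have h1 := Nat.pow_succ_le_ascFactorial (d + 1) r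
  rw [Nat.ascFactorial_eq_factorial_mul_choose] at h1
  exact_mod_cast h1

/-- For a polynomial of degree `r` that is eventually natural-valued on `ℕ`, the number
`r! * lc(P)` is a positive integer, hence at least `1`. -/
theorem one_le_factorial_mul_leadingCoeff (P : Polynomial ℚ) (r : ℕ)
    (hP : P.degree = (r : WithBot ℕ)) (H : ℕ → ℕ) (N : ℕ)
    (hN : ∀ d : ℕ, N ≤ d → (H d : ℚ) = P.eval (d : ℚ)) :
    (1 : ℚ) ≤ (r.factorial : ℚ) * P.leadingCoeff := by
  have hdeg : P.natDegree = r := Polynomial.natDegree_eq_of_degree_eq_some hP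
  have hne : P.leadingCoeff ≠ 0 := by
    rw [Ne, Polynomial.leadingCoeff_eq_zero]
    rintro rfl
    simp at hP
  have hpos : 0 < P.leadingCoeff := by
    refine lt_of_le_of_ne ?_ hne.symm
    refine ge_of_tendsto (tendsto_eval_div_pow P r hP) ?_
    filter_upwards [eventually_ge_atTop N] with d hd
    rw [← hN d hd]
    positivity
  have hfac : (0 : ℚ) < r.factorial := by exact_mod_cast r.factorial_pos
  -- `r! * lc(P)` is the `r`-th difference of `P` at `N`
  have hint : ∃ z : ℤ, (z : ℚ) = (r.factorial : ℚ) * P.leadingCoeff := by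
    have h1 := congrFun (Polynomial.fwdDiff_iter_degree_eq_factorial P) (N : ℚ)
    rw [fwdDiff_iter_eq_sum_shift, hdeg] at h1
    refine ⟨∑ j ∈ Finset.range (r + 1), ((-1 : ℤ) ^ (r - j) * r.choose j) * (H (N + j) : ℤ), ?_⟩
    simp only [Pi.smul_apply, Pi.natCast_apply, smul_eq_mul] at h1
    rw [mul_comm, ← h1, Int.cast_sum]
    refine Finset.sum_congr rfl fun j _ => ?_
    have h2 := hN (N + j) (Nat.le_add_right N j)
    push_cast at h2 ⊢
    rw [h2]
    simp
  obtain ⟨z, hz⟩ := hint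
  have hzpos : (0 : ℚ) < z := hz ▸ mul_pos hfac hpos
  rw [← hz]
  exact_mod_cast hzpos

end Growth

/-- Proposition 3.1 of the paper. Let `k` be an algebraically
closed field of characteristic `0`, `R = k[x_0, …, x_n]`, and `I ⊊ R` a saturated
homogeneous ideal whose Hilbert function eventually agrees with a polynomial
`P ∈ ℚ[t]` of degree `r`; set `e = n - r` and `deg = r! * leadingCoeff P`. Assume
the `ND(1)` property: for every `e ≤ j ≤ n` there is a nonzero polynomial `F_j` in
`(n-j)(n+1)` variables over `k` such that for every `(n-j)`-tuple of linear forms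
whose coefficient vector is not a zero of `F_j`, the degree-1 part of the saturation
of `I + (ℓ_1, …, ℓ_{n-j})` is exactly the `k`-span of `ℓ_1, …, ℓ_{n-j}`.
Then `deg ≥ e + 1`. -/
theorem stmt15 {k : Type*} [Field k] [IsAlgClosed k] [CharZero k] {n : ℕ}
    (I : Ideal (MvPolynomial (Fin (n + 1)) k)) (hIne : I ≠ ⊤)
    (hhom : ∀ f ∈ I, ∀ d : ℕ, MvPolynomial.homogeneousComponent d f ∈ I)
    (hsat : ∀ f : MvPolynomial (Fin (n + 1)) k,
      (∀ i : Fin (n + 1), MvPolynomial.X i * f ∈ I) → f ∈ I)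
    (P : Polynomial ℚ) (r : ℕ) (hP : P.degree = (r : WithBot ℕ))
    (hHF : ∃ N : ℕ, ∀ d : ℕ, N ≤ d → (hilbFun I d : ℚ) = P.eval (d : ℚ))
    (e : ℕ) (he : e = n - r)
    (hND : ∀ j : ℕ, e ≤ j → j ≤ n →
      ∃ F : MvPolynomial (Fin (n - j) × Fin (n + 1)) k, F ≠ 0 ∧
        ∀ c : Fin (n - j) → Fin (n + 1) → k,
          MvPolynomial.eval (fun p : Fin (n - j) × Fin (n + 1) => c p.1 p.2) F ≠ 0 →
            ∀ f : MvPolynomial (Fin (n + 1)) k, MvPolynomial.IsHomogeneous f 1 →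
              ((∃ M : ℕ, ∀ i : Fin (n + 1), MvPolynomial.X i ^ M * f ∈
                  I ⊔ Ideal.span (Set.range fun s : Fin (n - j) =>
                    ∑ i : Fin (n + 1), MvPolynomial.C (c s i) * MvPolynomial.X i)) ↔
                f ∈ Submodule.span k (Set.range fun s : Fin (n - j) =>
                  ∑ i : Fin (n + 1), MvPolynomial.C (c s i) * MvPolynomial.X i))) :
    (e : ℚ) + 1 ≤ (r.factorial : ℚ) * P.leadingCoeff := by
  obtain ⟨N, hN⟩ := hHF
  have : Infinite k := IsAlgClosed.instInfinite
  by_cases hr : r ≤ n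
  · obtain ⟨F, hF0, hF⟩ := hND e le_rfl (by omega)
    obtain ⟨c, hc, hbound⟩ := exists_section_bound (n - e) I hsat F hF0
    set K := satIdeal (I ⊔ Ideal.span (Set.range fun s => linForm (c s)))
    have h1 : n + 1 ≤ hilbFun K 1 + (n - e) :=
      le_hilbFun_one K (fun s => linForm (c s)) fun f hf hfK => (hF c hc f hf).mp hfK
    have hre : n - e = r := by omega
    rw [hre] at hbound h1
    have h2 : e + 1 ≤ hilbFun K 1 := by omega
    refine le_trans (by exact_mod_cast h2) (le_leadingCoeff_of_choose_le P r hP _ N fun d hd => ?_)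
    rw [← hN (d + 1) (by omega)]
    exact_mod_cast hbound d
  · -- here `e = 0`, as truncated subtraction
    have he0 : e = 0 := by omega
    rw [he0, Nat.cast_zero, zero_add]
    exact one_le_factorial_mul_leadingCoeff P r hP (hilbFun I) N hN
end

section
/- Let k be an algebraically closed field of characteristic 0 (an infinite field suffices), R = k[x_0,…,x_n], and I ⊊ R a saturated homogeneous ideal containing no nonzero linear form (i.e. I_1 = 0). Suppose there exist an integer c and an integer N such that dim_k(R_d/I_d) = c for all d ≥ N. Then c ≥ n + 1. -/
/-- The linear form `∑ i, a i * x_i` with coefficient vector `a`, as a linear function of `a`. -/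
noncomputable def linearFormMap (k : Type*) [Field k] (n : ℕ) :
    (Fin (n + 1) → k) →ₗ[k] MvPolynomial (Fin (n + 1)) k :=
  Fintype.linearCombination k MvPolynomial.X

lemma linearFormMap_isHomogeneous {k : Type*} [Field k] {n : ℕ} (a : Fin (n + 1) → k) :
    (linearFormMap k n a).IsHomogeneous 1 := by
  rw [linearFormMap, Fintype.linearCombination_apply]
  refine MvPolynomial.IsHomogeneous.sum _ _ _ fun i _ => ?_
  exact (MvPolynomial.homogeneousSubmodule _ k 1).smul_mem _ (MvPolynomial.isHomogeneous_X k i)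

lemma linearFormMap_single {k : Type*} [Field k] {n : ℕ} (i : Fin (n + 1)) :
    linearFormMap k n (Pi.single i 1) = MvPolynomial.X i := by
  simp [linearFormMap]

lemma linearFormMap_injective (k : Type*) [Field k] (n : ℕ) :
    Function.Injective (linearFormMap k n) :=
  linearIndependent_iff_injective_fintypeLinearCombination.mp (MvPolynomial.linearIndependent_X _ k)

/-- If `P = ann(f mod I)` contained every variable, saturation would put `f` in `I`, so `P` would be
the unit ideal. -/
lemma exists_X_notMem_of_mem_associatedPrimes {k : Type*} [Field k] {n : ℕ}
    {I : Ideal (MvPolynomial (Fin (n + 1)) k)}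
    (hsat : ∀ f : MvPolynomial (Fin (n + 1)) k,
      (∀ i : Fin (n + 1), MvPolynomial.X i * f ∈ I) → f ∈ I)
    {P : Ideal (MvPolynomial (Fin (n + 1)) k)}
    (hP : P ∈ associatedPrimes (MvPolynomial (Fin (n + 1)) k)
      (MvPolynomial (Fin (n + 1)) k ⧸ I)) :
    ∃ i, MvPolynomial.X i ∉ P := by
  rw [AssociatedPrimes.mem_iff, isAssociatedPrime_iff] at hP
  obtain ⟨prime, x, rfl⟩ := hP
  obtain ⟨f, rfl⟩ := Ideal.Quotient.mk_surjective x
  by_contra! hX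
  have hf : f ∈ I := hsat f fun i => by
    have h := hX i
    rw [Submodule.mem_colon_singleton, Submodule.mem_bot] at h
    exact Ideal.Quotient.eq_zero_iff_mem.mp h
  apply prime.ne_top
  rw [Ideal.Quotient.eq_zero_iff_mem.mpr hf]
  simp

/-- Prime avoidance for linear forms: the zero divisors on `R/I` form the union of the finitely many
associated primes, each meeting the space of linear forms in a proper subspace, and a vector space
over an infinite field is not a finite union of proper subspaces. -/
lemma exists_linearForm_nonzerodivisor {k : Type*} [Field k] [Infinite k] {n : ℕ}
    {I : Ideal (MvPolynomial (Fin (n + 1)) k)}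
    (hsat : ∀ f : MvPolynomial (Fin (n + 1)) k,
      (∀ i : Fin (n + 1), MvPolynomial.X i * f ∈ I) → f ∈ I) :
    ∃ a : Fin (n + 1) → k, ∀ f, linearFormMap k n a * f ∈ I → f ∈ I := by
  classical
  have hfin := associatedPrimes.finite (MvPolynomial (Fin (n + 1)) k)
    (MvPolynomial (Fin (n + 1)) k ⧸ I)
  -- The linear forms in an associated prime `P`, as a subspace of the coefficient space.
  let V : Ideal (MvPolynomial (Fin (n + 1)) k) → Subspace k (Fin (n + 1) → k) :=
    fun P => (P.restrictScalars k).comap (linearFormMap k n)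
  have hV : ⊤ ∉ hfin.toFinset.image V := by
    intro h
    obtain ⟨P, hP, hPV⟩ := Finset.mem_image.mp h
    obtain ⟨i, hi⟩ := exists_X_notMem_of_mem_associatedPrimes hsat (hfin.mem_toFinset.mp hP)
    have hmem : Pi.single i 1 ∈ V P := hPV ▸ Submodule.mem_top
    apply hi
    rw [← linearFormMap_single]
    exact hmem
  obtain ⟨a, ha⟩ := (Set.ne_univ_iff_exists_notMem _).mp
    (Subspace.biUnion_ne_univ_of_top_notMem hV)
  refine ⟨a, fun f hf => ?_⟩
  by_contra hfI
  have hzd : linearFormMap k n a ∈ ⋃ P ∈ associatedPrimes (MvPolynomial (Fin (n + 1)) k)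
      (MvPolynomial (Fin (n + 1)) k ⧸ I), (P : Set (MvPolynomial (Fin (n + 1)) k)) := by
    rw [biUnion_associatedPrimes_eq_zero_divisors]
    exact ⟨Ideal.Quotient.mk I f, fun h => hfI (Ideal.Quotient.eq_zero_iff_mem.mp h),
      Ideal.Quotient.eq_zero_iff_mem.mpr hf⟩
  obtain ⟨P, hP, haP⟩ := Set.mem_iUnion₂.mp hzd
  exact ha (Set.mem_iUnion₂.mpr
    ⟨V P, Finset.mem_image_of_mem V (hfin.mem_toFinset.mpr hP), haP⟩)

/-- the 0-dimensional base case of Proposition 3.1. Let `k` be an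
algebraically closed field of characteristic `0`, `R = k[x_0, …, x_n]`, and `I ⊊ R`
a saturated homogeneous ideal containing no nonzero linear form. If the Hilbert
function `d ↦ dim_k (R_d / I_d)` is eventually equal to a constant `c`, then
`c ≥ n + 1`. -/
theorem stmt16 {k : Type*} [Field k] [IsAlgClosed k] [CharZero k] {n : ℕ}
    (I : Ideal (MvPolynomial (Fin (n + 1)) k)) (hIne : I ≠ ⊤)
    (hhom : ∀ f ∈ I, ∀ d : ℕ, MvPolynomial.homogeneousComponent d f ∈ I)
    (hsat : ∀ f : MvPolynomial (Fin (n + 1)) k,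
      (∀ i : Fin (n + 1), MvPolynomial.X i * f ∈ I) → f ∈ I)
    (hlin : ∀ f ∈ I, MvPolynomial.IsHomogeneous f 1 → f = 0)
    (c N : ℕ) (hc : ∀ d : ℕ, N ≤ d → hilbFun I d = c) :
    n + 1 ≤ c := by
  obtain ⟨a, ha⟩ := exists_linearForm_nonzerodivisor hsat
  have hpow : ∀ (m : ℕ) (f), linearFormMap k n a ^ m * f ∈ I → f ∈ I := by
    intro m
    induction m with
    | zero => intro f hf; simpa using hf
    | succ m ih => intro f hf; exact ih f (ha _ (by rwa [← mul_assoc, ← pow_succ']))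
  -- The composite `k^(n+1) ≃ R_1 → R_(N+1)`, the second map being multiplication by `ℓ ^ N`.
  let φ : (Fin (n + 1) → k) →ₗ[k] MvPolynomial (Fin (n + 1)) k :=
    LinearMap.mulLeft k (linearFormMap k n a ^ N) ∘ₗ linearFormMap k n
  have hφI : ∀ b, φ b ∈ I → b = 0 := by
    intro b hb
    have h0 := hlin _ (hpow N _ hb) (linearFormMap_isHomogeneous b)
    exact linearFormMap_injective k n (h0.trans (map_zero _).symm)
  have hφinj : Function.Injective φ :=
    (injective_iff_map_eq_zero φ).mpr fun b hb => hφI b (hb ▸ I.zero_mem)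
  set H := MvPolynomial.homogeneousSubmodule (Fin (n + 1)) k (N + 1) with hH
  have hφH : LinearMap.range φ ≤ H := by
    rintro _ ⟨b, rfl⟩
    have h := ((linearFormMap_isHomogeneous a).pow N).mul (linearFormMap_isHomogeneous b)
    rwa [one_mul] at h
  have : FiniteDimensional k H :=
    Module.Finite.iff_fg.mpr (MvPolynomial.homogeneousSubmodule_fg _ _ (N + 1))
  set J := Submodule.restrictScalars k I ⊓ H with hJ
  have hJH : J ≤ H := inf_le_right
  have : FiniteDimensional k J := Submodule.finiteDimensional_of_le hJH
  have hdisj : LinearMap.range φ ⊓ J = ⊥ := by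
    rw [eq_bot_iff]
    rintro _ ⟨⟨b, rfl⟩, hb⟩
    simp [hφI b hb.1]
  have hdim := Submodule.finrank_sup_add_finrank_inf_eq (LinearMap.range φ) J
  rw [hdisj, finrank_bot, LinearMap.finrank_range_of_inj hφinj, Module.finrank_fin_fun] at hdim
  have hle := Submodule.finrank_mono (sup_le hφH hJH)
  have hcN := hc (N + 1) (Nat.le_succ N)
  rw [hilbFun, ← hH, ← hJ] at hcN
  omega
end
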